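/- arXiv:math/0405171 — 3 statements merged into one kernel-verified Lean document; each statement's English description precedes it below -/
import Mathlib

section
/- (Weak form of the Halberstam–Richert inequality.) Let f be a nonnegative multiplicative function such that Σ_{n ≤ x} f(n) = O(x) and such that there is a constant B with f(p^k) ≤ B·k for all primes p and all k ≥ 1. Then there exist constants C > 0 and X₀ such that for all X ≥ X₀, (1/X) · Σ_{m ≤ X} f(m) ≤ C · exp( Σ_{p ≤ X, p prime} (f(p) − 1)/p ) + C/ log X. -/
open Finset in
lemma hr_mertens1 (n : ℕ) (hn : 1 ≤ n) :
    ∑ p ∈ (range (n + 1)).filter Nat.Prime, Real.log p / p ≤ Real.log n + Real.log 4 := by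
  have hdvd : ∏ p ∈ (range (n + 1)).filter Nat.Prime, p ^ (n / p) ∣ n.factorial := by
    apply Finset.prod_dvd_of_isRelPrime
    · intro p hp q hq hpq
      simp only [coe_filter, Set.mem_ofPred_eq] at hp hq
      show IsRelPrime (p ^ (n / p)) (q ^ (n / q))
      rw [← Nat.coprime_iff_isRelPrime]
      exact Nat.Coprime.pow _ _ ((Nat.coprime_primes hp.2 hq.2).2 hpq)
    · intro p hp
      simp only [mem_filter, mem_range] at hp
      rw [hp.2.pow_dvd_factorial_iff (b := Nat.log p n + 2) (by omega)]
      have : n / p = n / p ^ 1 := by simp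
      rw [this]
      exact single_le_sum (f := fun i => n / p ^ i) (fun _ _ => Nat.zero_le _) (by simp)
  have hle : ∏ p ∈ (range (n + 1)).filter Nat.Prime, p ^ (n / p) ≤ n ^ n :=
    (Nat.le_of_dvd (Nat.factorial_pos n) hdvd).trans n.factorial_le_pow
  have h1 : ∑ p ∈ (range (n + 1)).filter Nat.Prime, ((n / p : ℕ) : ℝ) * Real.log p
      ≤ n * Real.log n := by
    have h2 : Real.log ((∏ p ∈ (range (n + 1)).filter Nat.Prime, p ^ (n / p) : ℕ) : ℝ) ≤
        Real.log ((n ^ n : ℕ) : ℝ) := by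
      apply Real.log_le_log
      · have : 0 < ∏ p ∈ (range (n + 1)).filter Nat.Prime, p ^ (n / p) :=
          Nat.pos_of_dvd_of_pos hdvd (Nat.factorial_pos n)
        exact_mod_cast this
      · exact_mod_cast hle
    push_cast at h2
    rw [Real.log_prod, Real.log_pow] at h2
    · simpa only [Real.log_pow] using h2
    · intro p hp
      simp only [mem_filter] at hp
      have := hp.2.pos
      positivity
  have hth : ∑ p ∈ (range (n + 1)).filter Nat.Prime, Real.log p ≤ Real.log 4 * n := by
    have := Chebyshev.theta_le_log4_mul_x (x := n) (by positivity)
    rw [Chebyshev.theta_eq_sum_Icc, Nat.floor_natCast] at this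
    convert this using 3
    ext x; simp
  have hn' : (0 : ℝ) < n := by exact_mod_cast hn
  have h3 : n * ∑ p ∈ (range (n + 1)).filter Nat.Prime, Real.log p / p ≤
      n * Real.log n + Real.log 4 * n := by
    refine le_trans ?_ (add_le_add h1 hth)
    rw [mul_sum, ← sum_add_distrib]
    apply sum_le_sum
    intro p hp
    simp only [mem_filter] at hp
    have hp0 : (0:ℝ) < p := by exact_mod_cast hp.2.pos
    have hl : 0 ≤ Real.log p := Real.log_natCast_nonneg p
    have : (n : ℝ) / p ≤ (n / p : ℕ) + 1 := by
      rw [← Nat.floor_div_eq_div (K := ℝ)]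
      exact (Nat.lt_floor_add_one _).le
    calc n * (Real.log p / p) = (n / p) * Real.log p := by ring
      _ ≤ ((n / p : ℕ) + 1) * Real.log p := by gcongr
      _ = _ := by ring
  have h4 : n * Real.log n + Real.log 4 * n = n * (Real.log n + Real.log 4) := by ring
  rw [h4] at h3
  exact le_of_mul_le_mul_left h3 hn'

open Finset in
lemma hr_mertens2 : ∃ c : ℝ, ∀ n : ℕ, 2 ≤ n →
    ∑ p ∈ (range (n + 1)).filter Nat.Prime, (1 : ℝ) / p ≤ Real.log (Real.log n) + c := by
  set S : ℕ → ℝ := fun n => ∑ p ∈ (range (n + 1)).filter Nat.Prime, (1 : ℝ) / p with hS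
  set A : ℕ → ℝ := fun n => ∑ p ∈ (range (n + 1)).filter Nat.Prime, Real.log p / p with hA
  set c := Real.log 4 with hc
  set T : ℕ → ℝ := fun n => S n - A n / Real.log n + c / Real.log n - Real.log (Real.log n) with hT
  have hc0 : 0 < c := Real.log_pos (by norm_num)
  have key : ∀ n, 2 ≤ n → T n ≤ T 2 := by
    intro n hn
    induction n, hn using Nat.le_induction with
    | base => exact le_rfl
    | succ n hn ih =>
      refine le_trans ?_ ih
      have hn2 : (2:ℝ) ≤ n := by exact_mod_cast hn
      have hl : 0 < Real.log n := Real.log_pos (by linarith)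
      have hl' : 0 < Real.log ((n + 1 : ℕ) : ℝ) := Real.log_pos (by push_cast; linarith)
      have hll : Real.log n ≤ Real.log ((n + 1 : ℕ) : ℝ) :=
        Real.log_le_log (by linarith) (by push_cast; linarith)
      have hAn : A n ≤ Real.log n + c := hr_mertens1 n (by omega)
      have hd : S (n+1) - A (n+1) / Real.log ((n + 1 : ℕ) : ℝ)
          = S n - A n / Real.log ((n + 1 : ℕ) : ℝ) := by
        simp only [hS, hA]
        rw [range_add_one (n := n + 1), filter_insert]
        split_ifs with hp
        · rw [sum_insert (by simp), sum_insert (by simp)]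
          have : ((n + 1 : ℕ) : ℝ) ≠ 0 := by positivity
          field_simp
          ring
        · rfl
      have hlog : 1 - Real.log n / Real.log ((n + 1 : ℕ) : ℝ) ≤
          Real.log (Real.log ((n + 1 : ℕ) : ℝ)) - Real.log (Real.log n) := by
        have := Real.log_le_sub_one_of_pos (div_pos hl hl')
        rw [Real.log_div hl.ne' hl'.ne'] at this
        linarith
      have hinv : 0 ≤ 1 / Real.log n - 1 / Real.log ((n + 1 : ℕ) : ℝ) := by
        have := one_div_le_one_div_of_le hl hll
        linarith
      have h5 : A n * (1 / Real.log n - 1 / Real.log ((n + 1 : ℕ) : ℝ)) ≤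
          (Real.log n + c) * (1 / Real.log n - 1 / Real.log ((n + 1 : ℕ) : ℝ)) := by gcongr
      have h6 : (Real.log n + c) * (1 / Real.log n - 1 / Real.log ((n + 1 : ℕ) : ℝ)) =
          1 - Real.log n / Real.log ((n + 1 : ℕ) : ℝ) + c / Real.log n
            - c / Real.log ((n + 1 : ℕ) : ℝ) := by
        field_simp
        ring
      have h7 : A n * (1 / Real.log n - 1 / Real.log ((n + 1 : ℕ) : ℝ)) =
          A n / Real.log n - A n / Real.log ((n + 1 : ℕ) : ℝ) := by ring
      simp only [hT]
      rw [hd]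
      linarith
  refine ⟨T 2 + 1, fun n hn => ?_⟩
  have hn2 : (2:ℝ) ≤ n := by exact_mod_cast hn
  have hl : 0 < Real.log n := Real.log_pos (by linarith)
  have h := key n hn
  have hAn : A n ≤ Real.log n + c := hr_mertens1 n (by omega)
  have h8 : A n / Real.log n ≤ 1 + c / Real.log n := by
    have : (Real.log n + c) / Real.log n = 1 + c / Real.log n := by field_simp
    rw [← this]; gcongr
  have : T n = S n - A n / Real.log n + c / Real.log n - Real.log (Real.log n) := rfl
  show S n ≤ _
  linarith

lemma hr_summable : Summable (fun k : ℕ => ((k : ℝ) + 2) ^ 2 / 2 ^ k) := by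
  have h0 := summable_pow_mul_geometric_of_norm_lt_one 2 (r := (1/2 : ℝ)) (by norm_num)
  have h1 := summable_pow_mul_geometric_of_norm_lt_one 1 (r := (1/2 : ℝ)) (by norm_num)
  have h2 := summable_pow_mul_geometric_of_norm_lt_one 0 (r := (1/2 : ℝ)) (by norm_num)
  have := (h0.add (h1.mul_left 4)).add (h2.mul_left 4)
  refine this.congr fun k => ?_
  simp only [one_div, inv_pow]
  field_simp
  ring

lemma hr_log_sum : Summable (fun p : ℕ => Real.log p / (p : ℝ) ^ 2) := by
  have h : Summable (fun p : ℕ => 2 * (1 / (p : ℝ) ^ (3/2 : ℝ))) :=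
    (Real.summable_one_div_nat_rpow.2 (by norm_num)).mul_left 2
  refine Summable.of_nonneg_of_le (fun p => ?_) (fun p => ?_) h
  · have := Real.log_natCast_nonneg p
    positivity
  · rcases Nat.eq_zero_or_pos p with rfl | hp
    · simp
    have hp' : (0:ℝ) < p := by exact_mod_cast hp
    have h1 := Real.log_le_rpow_div (x := p) hp'.le (ε := 1/2) (by norm_num)
    have h2 : (p : ℝ) ^ (2:ℕ) = (p : ℝ) ^ (3/2 : ℝ) * (p : ℝ) ^ (1/2 : ℝ) := by
      rw [← Real.rpow_add hp', ← Real.rpow_natCast]; norm_num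
    rw [h2, div_le_iff₀ (by positivity)]
    calc Real.log p ≤ _ := h1
      _ = _ := by field_simp

/-- the Euler product bound -/
lemma hr_euler (f : ℕ → ℝ) (hnn : ∀ n, 0 ≤ f n) (h1 : f 1 = 1)
    (hmul : ∀ m n : ℕ, Nat.Coprime m n → f (m * n) = f m * f n)
    (B : ℝ) (hB0 : 0 ≤ B) (hB : ∀ p k : ℕ, p.Prime → 1 ≤ k → f (p ^ k) ≤ B * k) :
    ∃ c : ℝ, ∀ N : ℕ, ∑ m ∈ Finset.Icc 1 N, f m / m ≤
      Real.exp (∑ p ∈ (Finset.range (N + 1)).filter Nat.Prime, f p / p + c) := by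
  set D := ∑' k : ℕ, ((k : ℝ) + 2) ^ 2 / 2 ^ k with hD
  have hD0 : 0 ≤ D := tsum_nonneg fun k => by positivity
  have hZ : Summable (fun n : ℕ => 1 / (n : ℝ) ^ 2) :=
    Real.summable_one_div_nat_pow.2 (by norm_num)
  have hterm : ∀ p : ℕ, p.Prime → ∀ k : ℕ, f (p ^ (k + 2)) / ((p ^ (k + 2) : ℕ) : ℝ) ≤
      B / (p : ℝ) ^ 2 * (((k : ℝ) + 2) ^ 2 / 2 ^ k) := by
    intro p hp k
    have hp2 : (2:ℝ) ≤ p := by exact_mod_cast hp.two_le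
    have hb := hB p (k + 2) hp (by omega)
    push_cast at hb ⊢
    have hk : (k : ℝ) + 2 ≤ ((k : ℝ) + 2) ^ 2 := by nlinarith [Nat.cast_nonneg (α := ℝ) k]
    have h2k : (2 : ℝ) ^ k ≤ (p : ℝ) ^ k := by gcongr
    calc f (p ^ (k + 2)) / (p : ℝ) ^ (k + 2) ≤ (B * ((k : ℝ) + 2) ^ 2) / (2 ^ k * (p : ℝ) ^ 2) := by
          have hpk : (p : ℝ) ^ (k + 2) = (p : ℝ) ^ k * (p : ℝ) ^ 2 := pow_add _ _ _
          have hb' : f (p ^ (k + 2)) ≤ B * ((k : ℝ) + 2) ^ 2 :=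
            hb.trans (mul_le_mul_of_nonneg_left hk hB0)
          rw [hpk]
          gcongr
      _ = _ := by field_simp
  have hsum2 : ∀ p : ℕ, p.Prime →
      Summable (fun k : ℕ => f (p ^ (k + 2)) / ((p ^ (k + 2) : ℕ) : ℝ)) := by
    intro p hp
    exact Summable.of_nonneg_of_le (fun k => div_nonneg (hnn _) (by positivity)) (hterm p hp)
      (hr_summable.mul_left _)
  have hsum : ∀ p : ℕ, p.Prime → Summable (fun k : ℕ => f (p ^ k) / ((p ^ k : ℕ) : ℝ)) := by
    intro p hp
    exact (summable_nat_add_iff 2).1 (hsum2 p hp)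
  have hts : ∀ p : ℕ, p.Prime → ∑' k : ℕ, f (p ^ k) / ((p ^ k : ℕ) : ℝ) ≤
      Real.exp (f p / p + B * D * (1 / (p : ℝ) ^ 2)) := by
    intro p hp
    rw [← (hsum p hp).sum_add_tsum_nat_add 2]
    have hle : ∑' k : ℕ, f (p ^ (k + 2)) / ((p ^ (k + 2) : ℕ) : ℝ) ≤ B / (p : ℝ) ^ 2 * D := by
      rw [hD, ← tsum_mul_left]
      exact (hsum2 p hp).tsum_le_tsum (hterm p hp) (hr_summable.mul_left _)
    have := Real.add_one_le_exp (f p / p + B * D * (1 / (p : ℝ) ^ 2))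
    simp only [Finset.sum_range_succ, Finset.sum_range_zero, pow_zero, pow_one, h1]
    have h9 : B / (p : ℝ) ^ 2 * D = B * D * (1 / (p : ℝ) ^ 2) := by ring
    simp only [Nat.cast_one, div_one]
    linarith
  refine ⟨B * D * ∑' n : ℕ, 1 / (n : ℝ) ^ 2, fun N => ?_⟩
  have hE := (EulerProduct.summable_and_hasSum_smoothNumbers_prod_primesBelow_tsum
    (f := fun n : ℕ => f n / (n : ℝ)) (by simp [h1])
    (by
      intro m n hmn
      simp only [hmul m n hmn]
      push_cast
      rw [mul_div_mul_comm])
    (by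
      intro p hp
      exact (hsum p hp).norm) (N + 1)).2
  have hstep : ∑ m ∈ Finset.Icc 1 N, f m / m ≤
      ∏ p ∈ (N+1).primesBelow, ∑' n : ℕ, f (p ^ n) / ((p ^ n : ℕ) : ℝ) := by
    have hmem : ∀ m ∈ Finset.Icc 1 N, m ∈ (N+1).smoothNumbers := by
      intro m hm
      rw [Finset.mem_Icc] at hm
      exact Nat.mem_smoothNumbers_of_lt (by omega) (by omega)
    rw [← Finset.sum_subtype_of_mem (fun m : ℕ => f m / (m : ℝ)) hmem]
    exact sum_le_hasSum _ (fun i _ => div_nonneg (hnn _) (by positivity)) hE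
  refine hstep.trans ?_
  calc _ ≤ ∏ p ∈ (N+1).primesBelow, Real.exp (f p / p + B * D * (1 / (p : ℝ) ^ 2)) := by
        apply Finset.prod_le_prod
        · intro p hp
          exact tsum_nonneg fun k => div_nonneg (hnn _) (by positivity)
        · intro p hp
          exact hts p (Nat.prime_of_mem_primesBelow hp)
    _ = Real.exp (∑ p ∈ (N+1).primesBelow, (f p / p + B * D * (1 / (p : ℝ) ^ 2))) := by
        rw [Real.exp_sum]
    _ ≤ _ := by
        rw [Finset.sum_add_distrib, ← Finset.mul_sum]
        apply Real.exp_le_exp.2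
        apply add_le_add le_rfl
        gcongr
        exact hZ.sum_le_tsum _ (fun i _ => by positivity)

/-- prime power sum -/
lemma hr_pp : ∃ c : ℝ, 0 ≤ c ∧ ∀ N m : ℕ, 1 ≤ m →
    ∑ p ∈ (Finset.range (N + 1)).filter Nat.Prime, ∑ k ∈ Finset.Icc 1 N,
      (if m * p ^ k ≤ N then (k : ℝ) ^ 2 * Real.log p else 0) ≤ c * (N / m) := by
  set D := ∑' k : ℕ, ((k : ℝ) + 2) ^ 2 / 2 ^ k with hD
  have hD0 : 0 ≤ D := tsum_nonneg fun k => by positivity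
  set E := ∑' p : ℕ, Real.log p / (p : ℝ) ^ 2 with hE
  have hlog : ∀ p : ℕ, 0 ≤ Real.log p := fun p => Real.log_natCast_nonneg p
  have hE0 : 0 ≤ E := tsum_nonneg fun p => by have := hlog p; positivity
  refine ⟨Real.log 4 + D * E, by positivity, fun N m hm => ?_⟩
  have hm' : (0:ℝ) < m := by exact_mod_cast hm
  have hone : ∀ p : ℕ, p.Prime → ∑ k ∈ Finset.Icc 1 N,
      (if m * p ^ k ≤ N then (k : ℝ) ^ 2 * Real.log p else 0) ≤
      (if m * p ≤ N then Real.log p else 0) + (N / m) * D * (Real.log p / (p : ℝ) ^ 2) := by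
    intro p hp
    have hp2 : (2:ℝ) ≤ p := by exact_mod_cast hp.two_le
    have h2 : ∀ k : ℕ, (if m * p ^ (k + 2) ≤ N then ((k + 2 : ℕ) : ℝ) ^ 2 * Real.log p else 0) ≤
        (N / m) * (Real.log p / (p : ℝ) ^ 2) * (((k : ℝ) + 2) ^ 2 / 2 ^ k) := by
      intro k
      have := hlog p
      split_ifs with h
      · have h' : (m : ℝ) * (p : ℝ) ^ (k + 2) ≤ N := by exact_mod_cast h
        have h2k : (2 : ℝ) ^ k ≤ (p : ℝ) ^ k := by gcongr
        have h3 : (m : ℝ) * ((p : ℝ) ^ 2 * 2 ^ k) ≤ N := by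
          refine le_trans ?_ h'
          rw [pow_add, mul_comm ((p:ℝ) ^ k)]
          gcongr
        have h4 : 1 ≤ (N : ℝ) / (m * ((p : ℝ) ^ 2 * 2 ^ k)) := by
          rw [le_div_iff₀ (by positivity)]; linarith
        push_cast
        calc ((k : ℝ) + 2) ^ 2 * Real.log p = 1 * (((k : ℝ) + 2) ^ 2 * Real.log p) := by ring
          _ ≤ (N : ℝ) / (m * ((p : ℝ) ^ 2 * 2 ^ k)) * (((k : ℝ) + 2) ^ 2 * Real.log p) := by gcongr
          _ = _ := by field_simp
      · positivity
    calc _ ≤ ∑ k ∈ Finset.range (N + 2),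
          (if m * p ^ k ≤ N then (k : ℝ) ^ 2 * Real.log p else 0) := by
          apply Finset.sum_le_sum_of_subset_of_nonneg
          · intro k hk
            simp only [Finset.mem_Icc, Finset.mem_range] at *
            omega
          · intro k _ _
            have := hlog p
            split_ifs <;> positivity
      _ = ∑ k ∈ Finset.range N,
          (if m * p ^ (k+2) ≤ N then ((k+2 : ℕ) : ℝ) ^ 2 * Real.log p else 0) +
          (if m * p ≤ N then Real.log p else 0) := by
          rw [Finset.sum_range_succ', Finset.sum_range_succ']
          simp [add_assoc, one_add_one_eq_two]
      _ ≤ _ := by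
          rw [add_comm]
          apply add_le_add le_rfl
          calc _ ≤ ∑ k ∈ Finset.range N,
                (N / m) * (Real.log p / (p : ℝ) ^ 2) * (((k : ℝ) + 2) ^ 2 / 2 ^ k) :=
                Finset.sum_le_sum fun k _ => h2 k
            _ ≤ (N / m) * (Real.log p / (p : ℝ) ^ 2) * D := by
                rw [← Finset.mul_sum]
                have := hlog p
                gcongr
                exact hr_summable.sum_le_tsum _ (fun i _ => by positivity)
            _ = _ := by ring
  calc _ ≤ ∑ p ∈ (Finset.range (N + 1)).filter Nat.Prime,
        ((if m * p ≤ N then Real.log p else 0) + (N / m) * D * (Real.log p / (p : ℝ) ^ 2)) := by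
        apply Finset.sum_le_sum
        intro p hp
        exact hone p (Finset.mem_filter.1 hp).2
    _ ≤ Real.log 4 * (N / m) + (N / m) * D * E := by
        rw [Finset.sum_add_distrib, ← Finset.mul_sum]
        apply add_le_add
        · have := Chebyshev.theta_le_log4_mul_x (x := (N : ℝ) / m) (by positivity)
          rw [Chebyshev.theta_eq_sum_Icc, Nat.floor_div_eq_div] at this
          refine le_trans (le_of_eq ?_) this
          rw [← Finset.sum_filter]
          apply Finset.sum_congr _ (fun _ _ => rfl)
          ext p
          simp only [Finset.mem_filter, Finset.mem_range, Finset.mem_Icc, Nat.zero_le, true_and]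
          rw [Nat.le_div_iff_mul_le hm, mul_comm]
          constructor
          · rintro ⟨⟨a, b⟩, c⟩; exact ⟨c, b⟩
          · rintro ⟨a, b⟩; exact ⟨⟨by nlinarith, b⟩, a⟩
        · gcongr
          exact hr_log_sum.sum_le_tsum _ (fun p _ => by have := hlog p; positivity)
    _ = _ := by ring

lemma hr_logsum (f : ℕ → ℝ) (hnn : ∀ n, 0 ≤ f n)
    (hmul : ∀ m n : ℕ, Nat.Coprime m n → f (m * n) = f m * f n)
    (B : ℝ) (hB0 : 0 ≤ B) (hB : ∀ p k : ℕ, p.Prime → 1 ≤ k → f (p ^ k) ≤ B * k) :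
    ∃ c : ℝ, 0 ≤ c ∧ ∀ N : ℕ, ∑ n ∈ Finset.Icc 1 N, f n * Real.log n ≤
      c * (N * ∑ m ∈ Finset.Icc 1 N, f m / m) := by
  obtain ⟨c, hc, hpp⟩ := hr_pp
  refine ⟨B * c, by positivity, fun N => ?_⟩
  have hlog : ∀ p : ℕ, 0 ≤ Real.log p := fun p => Real.log_natCast_nonneg p
  set P := (Finset.range (N + 1)).filter Nat.Prime with hP
  have hn : ∀ n ∈ Finset.Icc 1 N, f n * Real.log n ≤ ∑ m ∈ Finset.Icc 1 N, ∑ p ∈ P,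
      ∑ k ∈ Finset.Icc 1 N, if m * p ^ k = n then f m * (B * ((k : ℝ) ^ 2 * Real.log p)) else 0 := by
    intro n hn
    rw [Finset.mem_Icc] at hn
    rw [Finset.sum_comm, Real.log_nat_eq_sum_factorization, Finsupp.sum, Finset.mul_sum]
    have hnonneg : ∀ m p k : ℕ,
      0 ≤ (if m * p ^ k = n then f m * (B * ((k : ℝ) ^ 2 * Real.log p)) else 0) := by
      intro m p k
      have := hlog p
      have := hnn m
      split_ifs <;> positivity
    refine le_trans ?_ (Finset.sum_le_sum_of_subset_of_nonneg (s := n.factorization.support) ?_ ?_)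
    · apply Finset.sum_le_sum
      intro p hp
      rw [Nat.support_factorization, Nat.mem_primeFactors] at hp
      obtain ⟨hp, hpn, hn0⟩ := hp
      set k := n.factorization p with hk
      have hk1 : 1 ≤ k := (hp.dvd_iff_one_le_factorization hn0).1 hpn
      have heq : p ^ k * (n / p ^ k) = n := Nat.ordProj_mul_ordCompl_eq_self n p
      have hcop : Nat.Coprime (p ^ k) (n / p ^ k) :=
        Nat.Coprime.pow_left _ (Nat.coprime_ordCompl hp hn0)
      set m := n / p ^ k with hm
      have hm1 : 1 ≤ m := Nat.pos_of_ne_zero (by rintro h; rw [h] at heq; simp at heq; omega)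
      have hmN : m ≤ N := (Nat.div_le_self _ _).trans hn.2
      have hkN : k ≤ N := by
        have h1 : k < p ^ k := Nat.lt_pow_self hp.one_lt
        have : p ^ k ≤ n := Nat.le_of_dvd (by omega) ⟨m, heq.symm⟩
        omega
      refine le_trans ?_ (Finset.single_le_sum (f := fun m => ∑ k ∈ Finset.Icc 1 N,
        if m * p ^ k = n then f m * (B * ((k : ℝ) ^ 2 * Real.log p)) else 0)
        (fun i _ => Finset.sum_nonneg fun k _ => hnonneg _ _ _) (Finset.mem_Icc.2 ⟨hm1, hmN⟩))
      refine le_trans ?_ (Finset.single_le_sum (f := fun k : ℕ =>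
        if m * p ^ k = n then f m * (B * ((k : ℝ) ^ 2 * Real.log p)) else 0)
        (fun i _ => hnonneg _ _ _) (Finset.mem_Icc.2 ⟨hk1, hkN⟩))
      rw [if_pos (by rw [mul_comm]; exact heq)]
      have hfn : f n = f (p ^ k) * f m := by rw [← hmul _ _ hcop, heq]
      rw [hfn]
      have := hB p k hp hk1
      have := hlog p
      have := hnn m
      calc f (p ^ k) * f m * (k * Real.log p) ≤ (B * k) * f m * (k * Real.log p) := by gcongr
        _ = _ := by ring
    · intro p hp
      rw [Nat.support_factorization, Nat.mem_primeFactors] at hp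
      simp only [hP, Finset.mem_filter, Finset.mem_range]
      exact ⟨by have := Nat.le_of_dvd (by omega) hp.2.1; omega, hp.1⟩
    · intro p _ _
      exact Finset.sum_nonneg fun m _ => Finset.sum_nonneg fun k _ => hnonneg _ _ _
  calc _ ≤ _ := Finset.sum_le_sum hn
    _ = ∑ m ∈ Finset.Icc 1 N, ∑ p ∈ P, ∑ k ∈ Finset.Icc 1 N, ∑ n ∈ Finset.Icc 1 N,
          if m * p ^ k = n then f m * (B * ((k : ℝ) ^ 2 * Real.log p)) else 0 := by
        rw [Finset.sum_comm]
        refine Finset.sum_congr rfl fun m _ => ?_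
        rw [Finset.sum_comm]
        refine Finset.sum_congr rfl fun p _ => ?_
        rw [Finset.sum_comm]
    _ ≤ ∑ m ∈ Finset.Icc 1 N, f m * B * ∑ p ∈ P, ∑ k ∈ Finset.Icc 1 N,
          if m * p ^ k ≤ N then (k : ℝ) ^ 2 * Real.log p else 0 := by
        simp only [Finset.mul_sum]
        refine Finset.sum_le_sum fun m _ => Finset.sum_le_sum fun p _ =>
          Finset.sum_le_sum fun k _ => ?_
        rw [Finset.sum_ite_eq]
        have := hlog p
        have := hnn m
        simp only [Finset.mem_Icc]
        split_ifs with h1 h2 h2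
        · exact le_of_eq (by ring)
        · exact absurd h1.2 h2
        · positivity
        · simp
    _ ≤ ∑ m ∈ Finset.Icc 1 N, f m * B * (c * (N / m)) := by
        refine Finset.sum_le_sum fun m hm => ?_
        have := hnn m
        gcongr
        exact hpp N m (Finset.mem_Icc.1 hm).1
    _ = _ := by
        simp only [Finset.mul_sum]
        refine Finset.sum_congr rfl fun m _ => by ring

/-- Weak form of the Halberstam–Richert inequality: if `f` is a nonnegative
multiplicative function with `Σ_{n ≤ x} f(n) = O(x)` and `f(p^k) ≤ B k`, then
`(1/X) Σ_{m ≤ X} f(m) ≤ C exp(Σ_{p ≤ X} (f(p) - 1)/p) + C / log X` for large `X`. -/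
theorem halberstam_richert_weak
    (f : ℕ → ℝ)
    (hnn : ∀ n, 0 ≤ f n)
    (h1 : f 1 = 1)
    (hmul : ∀ m n : ℕ, Nat.Coprime m n → f (m * n) = f m * f n)
    (hO : ∃ A : ℝ, ∀ x : ℝ, 1 ≤ x → ∑ n ∈ Finset.Icc 1 ⌊x⌋₊, f n ≤ A * x)
    (hB : ∃ B : ℝ, ∀ p k : ℕ, p.Prime → 1 ≤ k → f (p ^ k) ≤ B * k) :
    ∃ C > (0 : ℝ), ∃ X₀ : ℝ, ∀ X : ℝ, X₀ ≤ X →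
      (1 / X) * ∑ m ∈ Finset.Icc 1 ⌊X⌋₊, f m ≤
        C * Real.exp (∑ p ∈ (Finset.range (⌊X⌋₊ + 1)).filter Nat.Prime, (f p - 1) / p)
          + C / Real.log X := by
  obtain ⟨B, hB⟩ := hB
  have hB0 : 0 ≤ B := by
    have := hB 2 1 Nat.prime_two le_rfl
    have := hnn (2 ^ 1)
    push_cast at *
    linarith
  obtain ⟨c1, hc1, hlogsum⟩ := hr_logsum f hnn hmul B hB0 hB
  obtain ⟨c2, heuler⟩ := hr_euler f hnn h1 hmul B hB0 hB
  obtain ⟨c3, hmert⟩ := hr_mertens2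
  refine ⟨(c1 + 1) * Real.exp (c2 + c3), by positivity, 2, fun X hX => ?_⟩
  set N := ⌊X⌋₊ with hN
  have hN2 : 2 ≤ N := Nat.le_floor (by exact_mod_cast hX)
  have hN2' : (2:ℝ) ≤ N := by exact_mod_cast hN2
  have hNX : (N : ℝ) ≤ X := Nat.floor_le (by linarith)
  have hlX : 0 < Real.log X := Real.log_pos (by linarith)
  have hlN : 0 < Real.log N := Real.log_pos (by linarith)
  have hL := hlogsum N
  have hEu := heuler N
  have hM := hmert N hN2
  set S := ∑ m ∈ Finset.Icc 1 N, f m with hS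
  have hS0 : 0 ≤ S := Finset.sum_nonneg fun m _ => hnn m
  set R := ∑ m ∈ Finset.Icc 1 N, f m / m with hR
  have hmain : Real.log N * S ≤ (c1 + 1) * (N * R) := by
    have : Real.log N * S ≤ ∑ n ∈ Finset.Icc 1 N, f n * Real.log n + N * R := by
      rw [hS, hR, Finset.mul_sum, Finset.mul_sum, ← Finset.sum_add_distrib]
      refine Finset.sum_le_sum fun n hn => ?_
      rw [Finset.mem_Icc] at hn
      have hn0 : (0:ℝ) < n := by exact_mod_cast hn.1
      have h3 : Real.log (N / n) ≤ N / n := Real.log_le_self (by positivity)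
      rw [Real.log_div (by linarith) hn0.ne'] at h3
      have := hnn n
      calc Real.log N * f n ≤ (N / n + Real.log n) * f n := by gcongr; linarith
        _ = _ := by ring
    linarith
  have hexp : Real.exp (∑ p ∈ (Finset.range (N + 1)).filter Nat.Prime, f p / p + c2) ≤
      Real.log N * (Real.exp (c2 + c3) *
        Real.exp (∑ p ∈ (Finset.range (N + 1)).filter Nat.Prime, (f p - 1) / p)) := by
    rw [← Real.exp_log hlN, ← Real.exp_add, ← Real.exp_add, Real.exp_le_exp]
    simp only [sub_div, Finset.sum_sub_distrib, Real.exp_log hlN]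
    linarith
  set W := Real.exp (∑ p ∈ (Finset.range (N + 1)).filter Nat.Prime, (f p - 1) / p) with hW
  have h10 : Real.log N * S ≤ Real.log N * (N * ((c1 + 1) * Real.exp (c2 + c3) * W)) := by
    refine hmain.trans ?_
    calc (c1 + 1) * (N * R) ≤ (c1 + 1) * (N * (Real.log N * (Real.exp (c2 + c3) * W))) := by
          gcongr
          exact hEu.trans hexp
      _ = _ := by ring
  have h11 := le_of_mul_le_mul_left h10 hlN
  have h12 : (1 / X) * S ≤ (c1 + 1) * Real.exp (c2 + c3) * W := by
    rw [one_div_mul_eq_div, div_le_iff₀ (by linarith), mul_comm]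
    refine h11.trans ?_
    gcongr
  have : 0 ≤ (c1 + 1) * Real.exp (c2 + c3) / Real.log X := by positivity
  linarith
end

section
/- Let f be a nonnegative multiplicative function such that there is a constant B with f(p^l) ≤ B·l for all primes p and all l ≥ 1. Then there is a constant C (depending only on B) such that for all X ≥ 2, Σ_{m ≤ X} f(m)/m ≤ C · Π_{p ≤ X, p prime} (1 + f(p)/p). -/
theorem aux_tail (f : ℕ → ℝ) (B : ℝ) (h0 : ∀ n, 0 ≤ f n) (p : ℕ) (hp : p.Prime)
    (hB : ∀ l : ℕ, 1 ≤ l → f (p ^ l) ≤ B * l) :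
    Summable (fun n : ℕ => f (p ^ n) / ((p ^ n : ℕ) : ℝ)) ∧
    ∑' n : ℕ, f (p ^ n) / ((p ^ n : ℕ) : ℝ) ≤ f 1 + f p / p + 6 * |B| / (p : ℝ) ^ 2 := by
  have hp2 : (2 : ℝ) ≤ p := by exact_mod_cast hp.two_le
  have hp0 : (0 : ℝ) < p := by linarith
  have h1 : HasSum (fun n : ℕ => (n : ℝ) * (1 / 2 : ℝ) ^ n) 2 := by
    have := hasSum_coe_mul_geometric_of_norm_lt_one (𝕜 := ℝ) (r := 1 / 2) (by norm_num)
    norm_num at this ⊢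
    exact this
  have h2 : HasSum (fun n : ℕ => (1 / 2 : ℝ) ^ n) 2 := hasSum_geometric_two
  have h3 : HasSum (fun n : ℕ => |B| / (p : ℝ) ^ 2 *
      ((n : ℝ) * (1 / 2 : ℝ) ^ n + 2 * (1 / 2 : ℝ) ^ n)) (6 * |B| / (p : ℝ) ^ 2) := by
    have e : 6 * |B| / (p : ℝ) ^ 2 = |B| / (p : ℝ) ^ 2 * (2 + 2 * 2) := by ring
    rw [e]
    exact (h1.add (h2.mul_left 2)).mul_left (|B| / (p : ℝ) ^ 2)
  have hle : ∀ n : ℕ, f (p ^ (n + 2)) / ((p ^ (n + 2) : ℕ) : ℝ) ≤ |B| / (p : ℝ) ^ 2 *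
      ((n : ℝ) * (1 / 2 : ℝ) ^ n + 2 * (1 / 2 : ℝ) ^ n) := by
    intro n
    have a1 : f (p ^ (n + 2)) ≤ |B| * ((n : ℝ) + 2) := by
      refine (hB (n + 2) (by omega)).trans ?_
      push_cast
      gcongr
      exact le_abs_self B
    have a2 : (1 / (p : ℝ)) ^ n ≤ (1 / 2 : ℝ) ^ n := by gcongr
    calc f (p ^ (n + 2)) / ((p ^ (n + 2) : ℕ) : ℝ)
        ≤ |B| * ((n : ℝ) + 2) / ((p ^ (n + 2) : ℕ) : ℝ) := by gcongr
      _ = |B| / (p : ℝ) ^ 2 * ((n : ℝ) + 2) * (1 / (p : ℝ)) ^ n := by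
          push_cast
          rw [pow_add, one_div, inv_pow]
          field_simp
      _ ≤ |B| / (p : ℝ) ^ 2 * ((n : ℝ) + 2) * (1 / 2) ^ n := by gcongr
      _ = _ := by ring
  have hs2 : Summable (fun n : ℕ => f (p ^ (n + 2)) / ((p ^ (n + 2) : ℕ) : ℝ)) :=
    Summable.of_nonneg_of_le (fun n => div_nonneg (h0 _) (Nat.cast_nonneg _)) hle h3.summable
  have hs : Summable (fun n : ℕ => f (p ^ n) / ((p ^ n : ℕ) : ℝ)) :=
    (summable_nat_add_iff (f := fun n : ℕ => f (p ^ n) / ((p ^ n : ℕ) : ℝ)) 2).1 hs2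
  refine ⟨hs, ?_⟩
  rw [← hs.sum_add_tsum_nat_add 2]
  have := hs2.tsum_le_tsum hle h3.summable
  rw [h3.tsum_eq] at this
  simp only [Finset.sum_range_succ, Finset.sum_range_zero]
  simp only [pow_zero, pow_one, Nat.cast_one, div_one, zero_add]
  linarith

/-- For a nonnegative multiplicative function `f` with `f(p^l) ≤ B l`, there is a
constant `C` depending only on `B` such that
`Σ_{m ≤ X} f(m)/m ≤ C Π_{p ≤ X} (1 + f(p)/p)` for all `X ≥ 2`. -/
theorem sum_div_le_prod_of_multiplicative (B : ℝ) :
    ∃ C : ℝ, ∀ f : ℕ → ℝ,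
      (∀ n, 0 ≤ f n) →
      f 1 = 1 →
      (∀ m n : ℕ, Nat.Coprime m n → f (m * n) = f m * f n) →
      (∀ p l : ℕ, p.Prime → 1 ≤ l → f (p ^ l) ≤ B * l) →
      ∀ X : ℝ, 2 ≤ X →
        ∑ m ∈ Finset.Icc 1 ⌊X⌋₊, f m / m ≤
          C * ∏ p ∈ (Finset.range (⌊X⌋₊ + 1)).filter Nat.Prime, (1 + f p / p) := by
  have hS : Summable (fun n : ℕ => 6 * |B| / (n : ℝ) ^ 2) := by
    have := (Real.summable_one_div_nat_pow (p := 2)).2 (by norm_num)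
    simpa [div_eq_mul_inv] using this.mul_left (6 * |B|)
  refine ⟨Real.exp (∑' n : ℕ, 6 * |B| / (n : ℝ) ^ 2), ?_⟩
  intro f h0 hf1 hmul hB X hX
  set N := ⌊X⌋₊
  set g : ℕ → ℝ := fun n => f n / (n : ℝ) with hg
  have hg0 : ∀ n, 0 ≤ g n := fun n => div_nonneg (h0 n) (Nat.cast_nonneg n)
  have hE := EulerProduct.summable_and_hasSum_smoothNumbers_prod_primesBelow_tsum (f := g)
    (by simp [hg, hf1])
    (by
      intro m n hmn
      simp only [hg, hmul m n hmn]
      push_cast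
      rw [mul_div_mul_comm])
    (by
      intro p hp
      exact ((aux_tail f B h0 p hp (fun l hl => hB p l hp hl)).1).norm)
    (N + 1)
  have hsum : ∑ m ∈ Finset.Icc 1 N, g m ≤ ∏ p ∈ (N + 1).primesBelow, ∑' n : ℕ, g (p ^ n) := by
    have hmem : ∀ m ∈ Finset.Icc 1 N, m ∈ (N + 1).smoothNumbers := by
      intro m hm
      rw [Finset.mem_Icc] at hm
      exact Nat.mem_smoothNumbers_of_lt (by omega) (by omega)
    rw [← Finset.sum_subtype_of_mem g hmem]
    exact sum_le_hasSum _ (fun i _ => hg0 _) hE.2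
  refine hsum.trans ?_
  calc ∏ p ∈ (N + 1).primesBelow, ∑' n : ℕ, g (p ^ n)
      ≤ ∏ p ∈ (N + 1).primesBelow, (Real.exp (6 * |B| / (p : ℝ) ^ 2) * (1 + f p / p)) := by
        refine Finset.prod_le_prod (fun p _ => tsum_nonneg (fun n => hg0 _)) ?_
        intro p hp
        have hpp : p.Prime := Nat.prime_of_mem_primesBelow hp
        have h1 := (aux_tail f B h0 p hpp (fun l hl => hB p l hpp hl)).2
        rw [hf1] at h1
        refine h1.trans ?_
        have h2 := Real.add_one_le_exp (6 * |B| / (p : ℝ) ^ 2)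
        have h3 : 0 ≤ f p / p := hg0 p
        have h4 : 0 ≤ 6 * |B| / (p : ℝ) ^ 2 := by positivity
        nlinarith [mul_nonneg h3 h4]
    _ = Real.exp (∑ p ∈ (N + 1).primesBelow, 6 * |B| / (p : ℝ) ^ 2) *
          ∏ p ∈ (N + 1).primesBelow, (1 + f p / p) := by
        rw [Finset.prod_mul_distrib, Real.exp_sum]
    _ ≤ _ := by
        refine mul_le_mul_of_nonneg_right ?_ (Finset.prod_nonneg fun p _ => ?_)
        · exact Real.exp_le_exp.2 (hS.sum_le_tsum _ (fun n _ => by positivity))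
        · have : 0 ≤ f p / p := hg0 p
          linarith
end

section
/- (Mertens' theorem.) Π_{p ≤ x, p prime} (1 − 1/p) is asymptotic to e^{−γ}/log x as x → ∞, where γ is Euler's constant; equivalently, lim_{x→∞} (log x) · Π_{p ≤ x, p prime} (1 − 1/p) = e^{−γ}. -/
open Filter Topology Finset

noncomputable def mC (n : ℕ) : ℝ := if n.Prime then Real.log n / n else 0
noncomputable def mA (n : ℕ) : ℝ := if n.Prime then 1 / (n : ℝ) else 0

lemma m_logfact (N : ℕ) : Real.log (N.factorial : ℝ) =
    ∑ p ∈ range (N+1) with p.Prime, (N.factorial.factorization p : ℝ) * Real.log p := by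
  rw [Real.log_nat_eq_sum_factorization, Finsupp.sum_of_support_subset]
  · intro p hp
    have hp' := Nat.support_factorization _ ▸ hp
    have h1 := Nat.prime_of_mem_primeFactors hp'
    have h2 := Nat.dvd_of_mem_primeFactors hp'
    simp only [mem_filter, mem_range]
    exact ⟨by have := (h1.dvd_factorial).1 h2; omega, h1⟩
  · simp

lemma m_val_lower {N p : ℕ} (hp : p.Prime) :
    (N : ℝ) / p - 1 ≤ (N.factorial.factorization p : ℝ) := by
  have h1 : N / p ≤ N.factorial.factorization p := by
    calc N / p ≤ ((p * (N / p)).factorial).factorization p := by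
          rw [Nat.factorization_factorial_mul hp]; omega
      _ ≤ _ := Nat.factorization_le_factorization_of_dvd_right
          (Nat.factorial_dvd_factorial (Nat.mul_div_le N p)) (Nat.factorial_ne_zero _)
          (Nat.factorial_ne_zero _)
  have h2 : (N : ℝ) / p < (N / p : ℕ) + 1 := by
    have := Nat.lt_floor_add_one ((N : ℝ) / p)
    rwa [Nat.floor_div_eq_div] at this
  have h3 : ((N / p : ℕ) : ℝ) ≤ (N.factorial.factorization p : ℝ) := by exact_mod_cast h1
  linarith

lemma m_val_upper {N p : ℕ} (hp : p.Prime) :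
    (N.factorial.factorization p : ℝ) ≤ N / (p - 1) := by
  have h1 := Nat.factorization_factorial_le_div_pred hp N
  calc (N.factorial.factorization p : ℝ) ≤ ((N / (p-1) : ℕ) : ℝ) := by exact_mod_cast h1
    _ ≤ (N : ℝ) / ((p - 1 : ℕ) : ℝ) := Nat.cast_div_le
    _ = _ := by rw [Nat.cast_sub hp.one_le]; simp

lemma m_summable_aux : Summable (fun n : ℕ => 4 * ((n : ℝ) ^ (3/2 : ℝ))⁻¹) :=
  (Real.summable_nat_rpow_inv.2 (by norm_num)).mul_left 4

lemma m_first : ∃ K : ℝ, ∀ N : ℕ, 1 ≤ N →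
    |∑ n ∈ range (N+1), mC n - Real.log N| ≤ K := by
  set M : ℝ := ∑' n : ℕ, 4 * ((n : ℝ) ^ (3/2 : ℝ))⁻¹ with hM
  have hM0 : 0 ≤ M := tsum_nonneg (fun n => by positivity)
  refine ⟨M + 1 + Real.log 4, fun N hN => ?_⟩
  have hN0 : (0:ℝ) < N := by exact_mod_cast hN
  have hS : ∑ n ∈ range (N+1), mC n = ∑ p ∈ range (N+1) with p.Prime, Real.log p / p := by
    rw [sum_filter]; rfl
  have hl4 : 0 ≤ Real.log 4 := Real.log_nonneg (by norm_num)
  have hlf := m_logfact N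
  have hθ : ∑ p ∈ range (N+1) with p.Prime, Real.log p ≤ Real.log 4 * N := by
    have := Chebyshev.theta_le_log4_mul_x (x := N) hN0.le
    rw [Chebyshev.theta_eq_sum_Icc, Nat.floor_natCast] at this
    convert this using 3
    ext; simp
  have hup : Real.log (N.factorial : ℝ) ≤ N * Real.log N := by
    rw [← Real.log_pow]
    apply Real.log_le_log (by positivity)
    exact_mod_cast Nat.factorial_le_pow N
  have hlow : N * Real.log N - N ≤ Real.log (N.factorial : ℝ) := by
    have := Stirling.le_log_factorial_stirling (n := N) (by omega)
    have h1 : 0 ≤ Real.log N := Real.log_natCast_nonneg N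
    have h2 : 0 ≤ Real.log (2 * Real.pi) := Real.log_nonneg (by nlinarith [Real.pi_gt_three])
    linarith
  set S := ∑ n ∈ range (N+1), mC n
  have e1 : N * S - ∑ p ∈ range (N+1) with p.Prime, Real.log p ≤ Real.log (N.factorial : ℝ) := by
    rw [hS, hlf, mul_sum, ← sum_sub_distrib]
    apply sum_le_sum
    intro p hp
    have hp' := (mem_filter.1 hp).2
    have h0 : 0 ≤ Real.log p := Real.log_natCast_nonneg p
    have := mul_le_mul_of_nonneg_right (m_val_lower (N := N) hp') h0
    calc _ = ((N:ℝ) / p - 1) * Real.log p := by ring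
      _ ≤ _ := this
  have e2 : Real.log (N.factorial : ℝ) ≤ N * (S + M) := by
    have : S + M ≥ ∑ p ∈ range (N+1) with p.Prime,
        (Real.log p / p + 4 * ((p : ℝ) ^ (3/2 : ℝ))⁻¹) := by
      rw [sum_add_distrib, hS]
      gcongr
      exact m_summable_aux.sum_le_tsum _ (fun n _ => by positivity)
    refine le_trans ?_ (mul_le_mul_of_nonneg_left this hN0.le)
    rw [hlf, mul_sum]
    apply sum_le_sum
    intro p hp
    have hp' := (mem_filter.1 hp).2
    have h0 : 0 ≤ Real.log p := Real.log_natCast_nonneg p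
    refine (mul_le_mul_of_nonneg_right (m_val_upper (N := N) hp') h0).trans ?_
    have hp2 : (2:ℝ) ≤ p := by exact_mod_cast hp'.two_le
    have hp0 : (0:ℝ) < p := by linarith
    have hlog : Real.log p ≤ 2 * (p:ℝ)^(1/2:ℝ) := by
      have := Real.log_le_rpow_div (x := p) hp0.le (ε := 1/2) (by norm_num)
      linarith
    rw [div_mul_eq_mul_div, mul_div_assoc]
    apply mul_le_mul_of_nonneg_left _ hN0.le
    have hr : (p:ℝ)^(3/2:ℝ) = p * (p:ℝ)^(1/2:ℝ) := by
      rw [show (3/2:ℝ) = 1 + 1/2 by norm_num, Real.rpow_add hp0, Real.rpow_one]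
    have hsq : (p:ℝ)^(1/2:ℝ) * (p:ℝ)^(1/2:ℝ) = p := by
      rw [← Real.rpow_add hp0]; norm_num
    have hq : 0 < (p:ℝ)^(1/2:ℝ) := by positivity
    rw [hr]
    set q := (p:ℝ)^(1/2:ℝ)
    have e : Real.log p / (p - 1) = Real.log p / p + Real.log p / (p * (p-1)) := by
      have : (p:ℝ) - 1 ≠ 0 := by linarith
      field_simp
      ring
    rw [e]
    gcongr
    rw [← div_eq_mul_inv, div_le_div_iff₀ (by nlinarith) (by positivity)]
    calc Real.log p * (p * q) ≤ (2 * q) * (p * q) := by gcongr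
      _ = 2 * p * (q * q) := by ring
      _ = 2 * p * p := by rw [hsq]
      _ ≤ 4 * (p * (p-1)) := by nlinarith
  rw [abs_le]
  constructor
  · have : N * (Real.log N - 1) ≤ N * (S + M) := by linarith
    have := le_of_mul_le_mul_left this hN0
    linarith
  · have : N * S ≤ N * (Real.log N + Real.log 4) := by linarith
    have := le_of_mul_le_mul_left this hN0
    linarith

lemma mC0 : mC 0 = 0 := by simp [mC, Nat.not_prime_zero]
lemma mC1 : mC 1 = 0 := by simp [mC, Nat.not_prime_one]
lemma mA0 : mA 0 = 0 := by simp [mA, Nat.not_prime_zero]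
lemma mA1 : mA 1 = 0 := by simp [mA, Nat.not_prime_one]
lemma mA_nonneg (n : ℕ) : 0 ≤ mA n := by unfold mA; split_ifs <;> positivity
lemma mA_le (n : ℕ) : mA n ≤ 1 / n := by
  unfold mA
  split_ifs
  · exact le_rfl
  · positivity

lemma m_second : ∃ C : ℝ, Tendsto (fun N : ℕ => ∑ n ∈ range (N+1), mA n - Real.log (Real.log N))
    atTop (𝓝 C) := by
  obtain ⟨K, hK⟩ := m_first
  set z : ℕ → ℝ := fun i => mC (i+2) - (Real.log ((i+2 : ℕ):ℝ) - Real.log ((i+1 : ℕ):ℝ)) with hz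
  set f : ℕ → ℝ := fun i => 1 / Real.log ((i+2 : ℕ):ℝ) with hf
  have hlpos : ∀ i : ℕ, 0 < Real.log ((i+2 : ℕ):ℝ) := fun i =>
    Real.log_pos (by push_cast; have : (0:ℝ) ≤ i := by positivity
                     linarith)
  have hzsum : ∀ n, ∑ i ∈ range n, z i = ∑ n ∈ range (n+2), mC n - Real.log ((n+1:ℕ):ℝ) := by
    intro n
    simp only [hz]
    rw [sum_sub_distrib, Finset.sum_range_succ' _ (n+1), Finset.sum_range_succ' _ n]
    have := Finset.sum_range_sub (fun i : ℕ => Real.log ((i+1 : ℕ):ℝ)) n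
    rw [this]
    simp [mC0, mC1]
  have hanti : Antitone f := by
    intro i j hij
    simp only [hf]
    apply one_div_le_one_div_of_le (hlpos i)
    apply Real.log_le_log (by positivity)
    exact_mod_cast (by omega)
  have hf0 : Tendsto f atTop (𝓝 0) := by
    have h1 : Tendsto (fun i : ℕ => Real.log ((i+2 : ℕ):ℝ)) atTop atTop :=
      Real.tendsto_log_atTop.comp (tendsto_natCast_atTop_atTop.comp (tendsto_add_atTop_nat 2))
    have h2 := h1.inv_tendsto_atTop
    simp only [hf, one_div]
    exact h2
  have hc1 := hanti.cauchySeq_series_mul_of_tendsto_zero_of_bounded hf0 (z := z) (b := K)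
    (fun n => by
      rw [hzsum, Real.norm_eq_abs]
      exact hK (n+1) (by omega))
  obtain ⟨C1, hC1⟩ := cauchySeq_tendsto_of_complete hc1
  set w : ℕ → ℝ := fun i => (Real.log ((i+2 : ℕ):ℝ) - Real.log ((i+1 : ℕ):ℝ)) / Real.log ((i+2 : ℕ):ℝ)
    - (Real.log (Real.log ((i+2 : ℕ):ℝ)) - Real.log (Real.log ((i+1 : ℕ):ℝ))) with hw
  have hws : Summable w := by
    rw [← summable_nat_add_iff 1]
    have hb : Summable (fun n : ℕ => (1 / ((n+2 : ℕ):ℝ)^2) * (1 / Real.log 2 ^ 2)) := by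
      apply Summable.mul_right
      exact (summable_nat_add_iff 2).2 (Real.summable_one_div_nat_pow.2 (by norm_num))
    refine Summable.of_norm_bounded hb (fun i => ?_)
    simp only [hw]
    have hX := hlpos i
    have hY := hlpos (i+1)
    have hl2 : Real.log 2 ≤ Real.log ((i+2 : ℕ):ℝ) := by
      apply Real.log_le_log (by norm_num); push_cast
      have : (0:ℝ) ≤ i := by positivity
      linarith
    have hXY : Real.log ((i+2 : ℕ):ℝ) ≤ Real.log ((i+1+2 : ℕ):ℝ) := by
      apply Real.log_le_log (by positivity); push_cast; linarith
    have hd : Real.log ((i+1+2 : ℕ):ℝ) - Real.log ((i+2 : ℕ):ℝ) ≤ 1 / ((i+2 : ℕ):ℝ) := by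
      rw [← Real.log_div (by positivity) (by positivity)]
      refine (Real.log_le_sub_one_of_pos (by positivity)).trans (le_of_eq ?_)
      have : ((i+2 : ℕ):ℝ) ≠ 0 := by positivity
      field_simp
      push_cast; ring
    rw [show i + 1 + 1 = i + 2 by ring]
    have hq : (0:ℝ) < ((i+2 : ℕ):ℝ) := by positivity
    have h2 : 0 < Real.log 2 := Real.log_pos (by norm_num)
    set X := Real.log ((i+2 : ℕ):ℝ)
    set Y := Real.log ((i+1+2 : ℕ):ℝ)
    rw [← Real.log_div hY.ne' hX.ne']
    have u1 := Real.one_sub_inv_le_log_of_pos (x := Y/X) (by positivity)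
    have u2 := Real.log_le_sub_one_of_pos (x := Y/X) (by positivity)
    have e1 : 1 - (Y/X)⁻¹ = (Y - X)/Y := by field_simp
    have e2 : Y/X - 1 - (Y-X)/Y = (Y-X)^2 * (1/(X*Y)) := by field_simp
    rw [Real.norm_eq_abs, abs_le]
    have hbd : (Y-X)^2 * (1/(X*Y)) ≤ (1 / ((i+2 : ℕ):ℝ)^2) * (1 / Real.log 2 ^ 2) := by
      have : (1 / ((i+2 : ℕ):ℝ)^2) = (1 / ((i+2 : ℕ):ℝ))^2 := by simp
      rw [this]
      gcongr
      nlinarith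
    have : 0 ≤ (1 / ((i+2 : ℕ):ℝ)^2) * (1 / Real.log 2 ^ 2) := by positivity
    constructor <;> linarith
  have hC2 := hws.hasSum.tendsto_sum_nat
  refine ⟨C1 + ∑' i, w i, ?_⟩
  rw [← tendsto_add_atTop_iff_nat 1]
  refine (hC1.add hC2).congr (fun n => ?_)
  rw [← sum_add_distrib]
  have := Finset.sum_range_sub (fun i : ℕ => Real.log (Real.log ((i+1 : ℕ):ℝ))) n
  have h3 : ∀ i ∈ range n, f i • z i + w i = mA (i+2) -
      (Real.log (Real.log ((i+1+1 : ℕ):ℝ)) - Real.log (Real.log ((i+1 : ℕ):ℝ))) := by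
    intro i _
    have := (hlpos i).ne'
    have e : f i * mC (i+2) = mA (i+2) := by
      simp only [hf, mC, mA]
      split_ifs
      · field_simp
      · simp
    simp only [smul_eq_mul, hz, hw, mul_sub, e]
    simp only [hf]
    rw [show i + 1 + 1 = i + 2 by ring]
    ring
  rw [sum_congr rfl h3, sum_sub_distrib, this, Finset.sum_range_succ' _ (n+1),
    Finset.sum_range_succ' _ n]
  simp [mA0, mA1]

noncomputable def mSA (u : ℝ) : ℝ := ∑ n ∈ range (⌊Real.exp u⌋₊ + 1), mA n
noncomputable def mSB (u : ℝ) : ℝ := ∑ n ∈ range (⌊u⌋₊ + 1), 1 / (n : ℝ)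

lemma m_loglog : Tendsto (fun x : ℝ => Real.log (Real.log (⌊x⌋₊ : ℝ)) - Real.log (Real.log x))
    atTop (𝓝 0) := by
  have h1 : Tendsto (fun x : ℝ => Real.log ((⌊x⌋₊ : ℝ) / x)) atTop (𝓝 0) := by
    have := (tendsto_nat_floor_div_atTop (R := ℝ)).log one_ne_zero
    simpa using this
  have h2 : Tendsto (fun x : ℝ => 1 + Real.log ((⌊x⌋₊ : ℝ) / x) * (Real.log x)⁻¹) atTop (𝓝 1) := by
    have := (h1.mul Real.tendsto_log_atTop.inv_tendsto_atTop).const_add 1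
    simpa using this
  have h3 := h2.log one_ne_zero
  rw [Real.log_one] at h3
  refine h3.congr' ?_
  filter_upwards [eventually_ge_atTop 3] with x hx
  have hf : (3:ℝ) ≤ (⌊x⌋₊ : ℝ) := by
    have : 3 ≤ ⌊x⌋₊ := Nat.le_floor (by exact_mod_cast hx)
    exact_mod_cast this
  have l1 : 0 < Real.log x := Real.log_pos (by linarith)
  have l2 : 0 < Real.log (⌊x⌋₊ : ℝ) := Real.log_pos (by linarith)
  rw [← Real.log_div l2.ne' l1.ne', Real.log_div (by linarith) (by linarith)]
  congr 1
  field_simp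
  ring

lemma m_A_real {C : ℝ} (hC : Tendsto (fun N : ℕ => ∑ n ∈ range (N+1), mA n - Real.log (Real.log N))
    atTop (𝓝 C)) : Tendsto (fun x : ℝ => ∑ n ∈ range (⌊x⌋₊+1), mA n - Real.log (Real.log x))
    atTop (𝓝 C) := by
  have h := (hC.comp (tendsto_nat_floor_atTop (α := ℝ))).add m_loglog
  rw [add_zero] at h
  refine h.congr (fun x => ?_)
  simp only [Function.comp]
  ring

lemma m_harm (n : ℕ) : ∑ i ∈ range (n+1), 1 / (i : ℝ) = (harmonic n : ℝ) := by
  rw [sum_range_succ']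
  simp [harmonic]

lemma m_E_lim {C : ℝ} (hC : Tendsto (fun N : ℕ => ∑ n ∈ range (N+1), mA n - Real.log (Real.log N))
    atTop (𝓝 C)) : Tendsto (fun u : ℝ => mSA u - mSB u)
    atTop (𝓝 (C - Real.eulerMascheroniConstant)) := by
  have h1 := (m_A_real hC).comp Real.tendsto_exp_atTop
  have h2 := Real.tendsto_harmonic_sub_log.comp (tendsto_nat_floor_atTop (α := ℝ))
  have h3 : Tendsto (fun x : ℝ => Real.log ((⌊x⌋₊ : ℝ) / x)) atTop (𝓝 0) := by
    have := (tendsto_nat_floor_div_atTop (R := ℝ)).log one_ne_zero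
    simpa using this
  have h := (h1.sub h2).sub h3
  rw [sub_zero] at h
  refine h.congr' ?_
  filter_upwards [eventually_ge_atTop 1] with x hx
  have hf : (1:ℝ) ≤ (⌊x⌋₊ : ℝ) := by
    have : 1 ≤ ⌊x⌋₊ := Nat.le_floor (by exact_mod_cast hx)
    exact_mod_cast this
  rw [Real.log_div (by linarith) (by linarith)]
  simp only [Function.comp, mSA, mSB, m_harm, Real.log_exp]
  ring

lemma mSA_mono : Monotone mSA := by
  intro u v h
  apply sum_le_sum_of_subset_of_nonneg
  · intro i; simp only [mem_range]; intro hi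
    have := Nat.floor_le_floor (Real.exp_le_exp.2 h)
    omega
  · intros; exact mA_nonneg _

lemma mSB_mono : Monotone mSB := by
  intro u v h
  apply sum_le_sum_of_subset_of_nonneg
  · intro i; simp only [mem_range]; intro hi
    have := Nat.floor_le_floor h
    omega
  · intros; positivity

lemma mSA_nonneg (u : ℝ) : 0 ≤ mSA u := sum_nonneg (fun _ _ => mA_nonneg _)
lemma mSB_nonneg (u : ℝ) : 0 ≤ mSB u := sum_nonneg (fun _ _ => by positivity)

lemma m_E_bdd {L : ℝ} (h : Tendsto (fun u : ℝ => mSA u - mSB u) atTop (𝓝 L)) :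
    ∃ K, ∀ u, |mSA u - mSB u| ≤ K := by
  have h1 : ∀ᶠ u in atTop, |mSA u - mSB u| ≤ |L| + 1 :=
    h.abs.eventually_le_const (by linarith)
  obtain ⟨U, hU⟩ := eventually_atTop.1 h1
  refine ⟨(|L| + 1) + (mSA U + mSB U), fun u => ?_⟩
  have hA := mSA_nonneg U
  have hB := mSB_nonneg U
  rcases le_total U u with hu | hu
  · have := hU u hu
    linarith
  · have := mSA_mono hu
    have := mSB_mono hu
    have := mSA_nonneg u
    have := mSB_nonneg u
    have := abs_nonneg L
    rw [abs_le]; constructor <;> linarith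

open MeasureTheory

lemma m_int_lim {L : ℝ} (h : Tendsto (fun u : ℝ => mSA u - mSB u) atTop (𝓝 L)) :
    Tendsto (fun δ : ℝ => ∫ v in Set.Ioi (0:ℝ), Real.exp (-v) * (mSA (v/δ) - mSB (v/δ)))
      (𝓝[>] 0) (𝓝 L) := by
  obtain ⟨K, hK⟩ := m_E_bdd h
  have e : L = ∫ v in Set.Ioi (0:ℝ), Real.exp (-v) * L := by
    rw [integral_mul_const, integral_exp_neg_Ioi]; simp
  rw [e]
  apply tendsto_integral_filter_of_dominated_convergence (fun v => Real.exp (-v) * K)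
  · refine Eventually.of_forall (fun δ => ?_)
    have m1 := mSA_mono.measurable
    have m2 := mSB_mono.measurable
    apply Measurable.aestronglyMeasurable
    fun_prop
  · refine Eventually.of_forall (fun δ => Eventually.of_forall (fun v => ?_))
    rw [norm_mul, Real.norm_eq_abs, Real.norm_eq_abs, Real.abs_exp]
    gcongr
    exact hK _
  · exact (integrableOn_exp_neg_Ioi 0).mul_const K
  · refine (ae_restrict_iff' measurableSet_Ioi).2 (Eventually.of_forall (fun v hv => ?_))
    apply Tendsto.const_mul
    apply h.comp
    exact (tendsto_inv_nhdsGT_zero (𝕜 := ℝ)).const_mul_atTop hv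

lemma m_exp_int {c : ℝ} (hc : 0 ≤ c) :
    IntegrableOn (fun v => Real.exp (-v) * (if c ≤ v then 1 else 0)) (Set.Ioi (0:ℝ)) ∧
    ∫ v in Set.Ioi (0:ℝ), Real.exp (-v) * (if c ≤ v then 1 else 0) = Real.exp (-c) := by
  have e : (fun v : ℝ => Real.exp (-v) * (if c ≤ v then (1:ℝ) else 0)) =
      (Set.Ici c).indicator (fun v => Real.exp (-v)) := by
    ext v; simp [Set.indicator_apply]
  rw [e]
  constructor
  · exact (integrableOn_exp_neg_Ioi 0).indicator measurableSet_Ici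
  · rw [← integral_indicator measurableSet_Ioi, Set.indicator_indicator,
      integral_indicator (measurableSet_Ioi.inter measurableSet_Ici)]
    rcases hc.eq_or_lt with rfl | hc
    · rw [Set.inter_eq_left.2 Set.Ioi_subset_Ici_self]
      exact integral_exp_neg_Ioi _
    · have hsub : Set.Ici c ⊆ Set.Ioi 0 := fun x hx => lt_of_lt_of_le hc hx
      rw [Set.inter_eq_right.2 hsub, integral_Ici_eq_integral_Ioi]
      exact integral_exp_neg_Ioi _

lemma m_tsum_eq {δ : ℝ} (hδ : 0 < δ) (hs1 : Summable (fun n : ℕ => mA n * Real.exp (-(δ * Real.log n))))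
    (hs2 : Summable (fun n : ℕ => 1 / (n:ℝ) * Real.exp (-(δ * n)))) :
    ∑' n : ℕ, (mA n * Real.exp (-(δ * Real.log n)) - 1 / (n:ℝ) * Real.exp (-(δ * n))) =
    ∫ v in Set.Ioi (0:ℝ), Real.exp (-v) * (mSA (v/δ) - mSB (v/δ)) := by
  have k1 : ∀ n : ℕ, 0 ≤ δ * Real.log n := fun n => mul_nonneg hδ.le (Real.log_natCast_nonneg n)
  have k2 : ∀ n : ℕ, 0 ≤ δ * (n:ℝ) := fun n => by positivity
  set F : ℕ → ℝ → ℝ := fun n v =>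
    mA n * (Real.exp (-v) * (if δ * Real.log n ≤ v then 1 else 0)) -
    1 / (n:ℝ) * (Real.exp (-v) * (if δ * n ≤ v then 1 else 0)) with hF
  have i1 : ∀ n, Integrable (fun v => mA n * (Real.exp (-v) * (if δ * Real.log n ≤ v then 1 else 0)))
    (volume.restrict (Set.Ioi 0)) := fun n => (m_exp_int (k1 n)).1.const_mul _
  have i2 : ∀ n : ℕ, Integrable (fun v => 1 / (n:ℝ) * (Real.exp (-v) * (if δ * n ≤ v then 1 else 0)))
    (volume.restrict (Set.Ioi 0)) := fun n => (m_exp_int (k2 n)).1.const_mul _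
  have j1 : ∀ n, ∫ v in Set.Ioi (0:ℝ), mA n * (Real.exp (-v) * (if δ * Real.log n ≤ v then 1 else 0))
      = mA n * Real.exp (-(δ * Real.log n)) := fun n => by
    rw [integral_const_mul, (m_exp_int (k1 n)).2]
  have j2 : ∀ n : ℕ, ∫ v in Set.Ioi (0:ℝ), 1 / (n:ℝ) * (Real.exp (-v) * (if δ * n ≤ v then 1 else 0))
      = 1 / (n:ℝ) * Real.exp (-(δ * n)) := fun n => by
    rw [integral_const_mul, (m_exp_int (k2 n)).2]
  have hint : ∀ n, Integrable (F n) (volume.restrict (Set.Ioi 0)) := fun n => (i1 n).sub (i2 n)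
  have hsum : Summable (fun n => ∫ v in Set.Ioi (0:ℝ), ‖F n v‖) := by
    refine Summable.of_nonneg_of_le (fun n => integral_nonneg (fun _ => norm_nonneg _)) (fun n => ?_)
      (hs1.add hs2)
    rw [← j1, ← j2, ← integral_add (i1 n) (i2 n)]
    refine integral_mono (hint n).norm ((i1 n).add (i2 n)) (fun v => ?_)
    simp only [hF]
    refine (norm_sub_le _ _).trans (le_of_eq ?_)
    rw [Real.norm_of_nonneg, Real.norm_of_nonneg]
    · positivity
    · have := mA_nonneg n
      positivity
  have key := (hasSum_integral_of_summable_integral_norm hint hsum).tsum_eq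
  have lhs : ∀ n, ∫ v in Set.Ioi (0:ℝ), F n v =
      mA n * Real.exp (-(δ * Real.log n)) - 1 / (n:ℝ) * Real.exp (-(δ * n)) := fun n => by
    rw [← j1, ← j2]; exact integral_sub (i1 n) (i2 n)
  rw [tsum_congr lhs] at key
  rw [key]
  refine setIntegral_congr_fun measurableSet_Ioi (fun v hv => ?_)
  have hv : 0 < v := hv
  refine HasSum.tsum_eq ?_
  rw [mul_sub]
  refine HasSum.sub ?_ ?_
  · have : Real.exp (-v) * mSA (v/δ) = ∑ n ∈ range (⌊Real.exp (v/δ)⌋₊ + 1),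
        mA n * (Real.exp (-v) * (if δ * Real.log n ≤ v then 1 else 0)) := by
      rw [mSA, mul_sum]
      refine sum_congr rfl (fun n hn => ?_)
      rcases Nat.eq_zero_or_pos n with rfl | hn0
      · simp [mA0]
      have hn0' : (0:ℝ) < n := by exact_mod_cast hn0
      have h1 : (n:ℝ) ≤ Real.exp (v/δ) := by
        rw [← Nat.le_floor_iff (Real.exp_pos _).le]; have := mem_range.1 hn; omega
      rw [if_pos]
      · ring
      · have := (Real.log_le_iff_le_exp hn0').2 h1
        rwa [le_div_iff₀ hδ, mul_comm] at this
    rw [this]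
    refine hasSum_sum_of_ne_finset_zero (fun n hn => ?_)
    rw [if_neg]
    · simp
    · intro h
      apply hn
      rw [mem_range, Nat.lt_succ_iff, Nat.le_floor_iff (Real.exp_pos _).le]
      rcases Nat.eq_zero_or_pos n with rfl | hn0
      · simp; positivity
      have hn0' : (0:ℝ) < n := by exact_mod_cast hn0
      rw [← Real.log_le_iff_le_exp hn0', le_div_iff₀ hδ, mul_comm]
      exact h
  · have : Real.exp (-v) * mSB (v/δ) = ∑ n ∈ range (⌊v/δ⌋₊ + 1),
        1 / (n:ℝ) * (Real.exp (-v) * (if δ * n ≤ v then 1 else 0)) := by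
      rw [mSB, mul_sum]
      refine sum_congr rfl (fun n hn => ?_)
      have h1 : (n:ℝ) ≤ v/δ := by
        rw [← Nat.le_floor_iff (by positivity)]; have := mem_range.1 hn; omega
      rw [if_pos]
      · ring
      · rwa [le_div_iff₀ hδ, mul_comm] at h1
    rw [this]
    refine hasSum_sum_of_ne_finset_zero (fun n hn => ?_)
    rw [if_neg]
    · simp
    · intro h
      apply hn
      rw [mem_range, Nat.lt_succ_iff, Nat.le_floor_iff (by positivity), le_div_iff₀ hδ, mul_comm]
      exact h

noncomputable def mQ (δ : ℝ) (n : ℕ) : ℝ := mA n * Real.exp (-(δ * Real.log n))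
noncomputable def mR (δ : ℝ) (n : ℕ) : ℝ := -Real.log (1 - mQ δ n) - mQ δ n

lemma mQ_nonneg (δ : ℝ) (n : ℕ) : 0 ≤ mQ δ n := mul_nonneg (mA_nonneg n) (Real.exp_pos _).le

lemma mQ_le {δ : ℝ} (hδ : 0 ≤ δ) (n : ℕ) : mQ δ n ≤ mA n := by
  have h1 : Real.exp (-(δ * Real.log n)) ≤ 1 := by
    rw [Real.exp_le_one_iff]
    have := mul_nonneg hδ (Real.log_natCast_nonneg n)
    linarith
  exact mul_le_of_le_one_right (mA_nonneg n) h1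

lemma mA_le_half (n : ℕ) : mA n ≤ 1/2 := by
  unfold mA
  split_ifs with h
  · have : (2:ℝ) ≤ n := by exact_mod_cast h.two_le
    apply one_div_le_one_div_of_le (by norm_num) this
  · norm_num

lemma mR_bound {δ : ℝ} (hδ : 0 ≤ δ) (n : ℕ) : ‖mR δ n‖ ≤ 2 * (1 / (n:ℝ)^2) := by
  have h0 := mQ_nonneg δ n
  have h1 := mQ_le hδ n
  have h2 := mA_le_half n
  have h3 := mA_le n
  have h := Real.abs_log_sub_add_sum_range_le (x := mQ δ n) (by rw [abs_of_nonneg h0]; linarith) 1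
  have e : ‖mR δ n‖ = |∑ i ∈ range 1, mQ δ n ^ (i + 1) / ((i:ℝ) + 1) + Real.log (1 - mQ δ n)| := by
    rw [Real.norm_eq_abs, mR, ← abs_neg]; simp
  rw [e]
  refine h.trans ?_
  rw [abs_of_nonneg h0]
  have : mQ δ n ^ 2 ≤ 1/(n:ℝ)^2 := by
    rw [← one_div_pow]
    exact pow_le_pow_left₀ h0 (h1.trans h3) 2
  rw [div_le_iff₀ (by linarith)]
  norm_num only
  have h5 : 0 ≤ 1/(n:ℝ)^2 := by positivity
  nlinarith

lemma mR_bound_summable : Summable (fun n : ℕ => 2 * (1 / (n:ℝ)^2)) :=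
  (Real.summable_one_div_nat_pow.2 (by norm_num)).mul_left 2

lemma mR_summable {δ : ℝ} (hδ : 0 ≤ δ) : Summable (mR δ) :=
  Summable.of_norm_bounded mR_bound_summable (mR_bound hδ)

lemma mR_lim : Tendsto (fun δ : ℝ => ∑' n, mR δ n) (𝓝[>] 0) (𝓝 (∑' n, mR 0 n)) := by
  refine tendsto_tsum_of_dominated_convergence mR_bound_summable (fun n => ?_) ?_
  · have hq : ContinuousAt (fun δ => mQ δ n) 0 := by unfold mQ; fun_prop
    have : ContinuousAt (fun δ => mR δ n) 0 := by
      unfold mR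
      refine ContinuousAt.sub (ContinuousAt.neg (ContinuousAt.log (by fun_prop) ?_)) hq
      have := mQ_le le_rfl n
      have := mA_le_half n
      linarith
    exact this.tendsto.mono_left nhdsWithin_le_nhds
  · filter_upwards [self_mem_nhdsWithin] with δ hδ
    exact mR_bound (le_of_lt hδ)

noncomputable def mF (s : ℝ) (hs : s ≠ 0) : ℕ →*₀ ℝ where
  toFun n := 1 / (n:ℝ) ^ s
  map_zero' := by simp [Real.zero_rpow hs]
  map_one' := by simp
  map_mul' m n := by
    push_cast
    rw [Real.mul_rpow (by positivity) (by positivity)]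
    field_simp

lemma mQ_prime (δ : ℝ) {n : ℕ} (h : n.Prime) : mQ δ n = 1 / (n:ℝ) ^ (1 + δ) := by
  have hn : (0:ℝ) < n := by exact_mod_cast h.pos
  rw [mQ, mA, if_pos h, Real.rpow_add hn, Real.rpow_one, Real.exp_neg, Real.rpow_def_of_pos hn,
    mul_comm δ]
  field_simp

lemma mQ_summable {δ : ℝ} (hδ : 0 < δ) : Summable (mQ δ) := by
  refine Summable.of_nonneg_of_le (mQ_nonneg δ) (fun n => ?_)
    (Real.summable_one_div_nat_rpow.2 (show 1 < 1 + δ by linarith))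
  by_cases h : n.Prime
  · exact (mQ_prime δ h).le
  · simp only [mQ, mA, if_neg h, zero_mul]; positivity

lemma m_euler {δ : ℝ} (hδ : 0 < δ) :
    HasSum (fun n => -Real.log (1 - mQ δ n)) (Real.log (∑' n : ℕ, 1 / (n:ℝ) ^ (1 + δ))) := by
  have hs : Summable (fun n : ℕ => 1 / (n:ℝ) ^ (1 + δ)) :=
    Real.summable_one_div_nat_rpow.2 (show 1 < 1 + δ by linarith)
  have hpos : 0 < ∑' n : ℕ, 1 / (n:ℝ) ^ (1 + δ) :=
    hs.tsum_pos (fun n => by positivity) 1 (by simp)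
  have h := EulerProduct.eulerProduct_completely_multiplicative_hasProd
    (f := mF (1+δ) (by linarith)) hs.norm
  have hlt : ∀ n, 0 < 1 - mQ δ n := fun n => by
    have := mQ_le hδ.le n
    have := mA_le_half n
    linarith
  have h2 : HasSum (fun p : Nat.Primes => -Real.log (1 - mQ δ p))
      (Real.log (∑' n : ℕ, 1 / (n:ℝ) ^ (1 + δ))) := by
    have h3 := Tendsto.log h hpos.ne'
    refine h3.congr (fun s => ?_)
    rw [Real.log_prod]
    · refine sum_congr rfl (fun p _ => ?_)
      have hq := mQ_prime δ p.2
      have hf : mF (1+δ) (by linarith) (p:ℕ) = 1 / ((p:ℕ):ℝ) ^ (1 + δ) := rfl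
      simp only [Real.log_inv]
      rw [hf]
      exact congrArg (fun t => -Real.log (1 - t)) hq.symm
    · intro p _
      have := (hlt p).ne'
      rw [mQ_prime δ p.2] at this
      exact inv_ne_zero this
  have h4 := (hasSum_subtype_iff_indicator (f := fun n : ℕ => -Real.log (1 - mQ δ n))
    (s := {p | p.Prime})).1 h2
  convert h4 using 1
  ext n
  by_cases hn : n.Prime
  · simp [hn]
  · simp [hn, mQ, mA]

lemma m_b {δ : ℝ} (hδ : 0 < δ) :
    HasSum (fun n : ℕ => 1 / (n:ℝ) * Real.exp (-(δ * n))) (-Real.log (1 - Real.exp (-δ))) := by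
  have h := Real.hasSum_pow_div_log_of_abs_lt_one (x := Real.exp (-δ))
    (by rw [Real.abs_exp, Real.exp_lt_one_iff]; linarith)
  rw [← hasSum_nat_add_iff' 1]
  simp only [range_one, sum_singleton, Nat.cast_zero, div_zero, zero_mul, sub_zero]
  suffices e : (fun n : ℕ => 1 / (((n+1 : ℕ):ℝ)) * Real.exp (-(δ * ((n+1 : ℕ):ℝ)))) =
      fun n : ℕ => Real.exp (-δ) ^ (n + 1) / ((n:ℝ) + 1) by
    rw [e]; exact h
  funext n
  rw [← Real.exp_nat_mul]
  push_cast
  rw [show -(δ * ((n:ℝ)+1)) = (n+1) * -δ by ring]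
  ring

lemma m_const {C : ℝ} (hC : Tendsto (fun N : ℕ => ∑ n ∈ range (N+1), mA n - Real.log (Real.log N))
    atTop (𝓝 C)) : C + ∑' n, mR 0 n = Real.eulerMascheroniConstant := by
  have h1 := m_int_lim (m_E_lim hC)
  have h2 := h1.add mR_lim
  have z1 : Tendsto (fun δ : ℝ => Real.log (δ * ∑' n : ℕ, 1 / (n:ℝ) ^ (1 + δ))) (𝓝[>] 0) (𝓝 0) := by
    have hsh : Tendsto (fun δ : ℝ => 1 + δ) (𝓝[>] 0) (𝓝[>] 1) := by
      rw [tendsto_nhdsWithin_iff]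
      constructor
      · have : ContinuousAt (fun δ : ℝ => 1 + δ) 0 := by fun_prop
        have := this.tendsto.mono_left (nhdsWithin_le_nhds (s := Set.Ioi 0))
        simpa using this
      · filter_upwards [self_mem_nhdsWithin] with δ hδ
        simpa using hδ
    have := (tendsto_sub_mul_tsum_nat_rpow.comp hsh).log one_ne_zero
    simpa [Function.comp_def] using this
  have z2 : Tendsto (fun δ : ℝ => Real.log ((1 - Real.exp (-δ)) / δ)) (𝓝[>] 0) (𝓝 0) := by
    have hd : HasDerivAt (fun x : ℝ => 1 - Real.exp (-x)) 1 0 := by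
      have := ((hasDerivAt_neg (0:ℝ)).exp).const_sub 1
      simpa using this
    have := (hasDerivAt_iff_tendsto_slope_zero.1 hd).mono_left
      (nhdsWithin_mono 0 (fun x (hx : x ∈ Set.Ioi (0:ℝ)) => (ne_of_gt hx : x ≠ 0)))
    have := this.log one_ne_zero
    rw [Real.log_one] at this
    refine this.congr (fun δ => ?_)
    simp [div_eq_inv_mul]
  have h3 := z1.add z2
  rw [add_zero] at h3
  have heq : ∀ᶠ δ : ℝ in 𝓝[>] 0,
      Real.log (δ * ∑' n : ℕ, 1 / (n:ℝ) ^ (1 + δ)) + Real.log ((1 - Real.exp (-δ)) / δ) =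
      (∫ v in Set.Ioi (0:ℝ), Real.exp (-v) * (mSA (v/δ) - mSB (v/δ))) + ∑' n, mR δ n := by
    filter_upwards [self_mem_nhdsWithin] with δ hδ
    have hδ : 0 < δ := hδ
    have hs : Summable (fun n : ℕ => 1 / (n:ℝ) ^ (1 + δ)) :=
      Real.summable_one_div_nat_rpow.2 (show 1 < 1 + δ by linarith)
    have hpos : 0 < ∑' n : ℕ, 1 / (n:ℝ) ^ (1 + δ) :=
      hs.tsum_pos (fun n => by positivity) 1 (by simp)
    have he : 0 < 1 - Real.exp (-δ) := by
      have : Real.exp (-δ) < 1 := by rw [Real.exp_lt_one_iff]; linarith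
      linarith
    have hQ := mQ_summable hδ
    have hB := m_b hδ
    have hT := (hQ.hasSum.sub hB).tsum_eq
    simp only [mQ] at hT
    rw [← m_tsum_eq hδ hQ hB.summable, hT]
    have hr : ∑' n, mR δ n = Real.log (∑' n : ℕ, 1 / (n:ℝ) ^ (1 + δ)) - ∑' n, mQ δ n :=
      ((m_euler hδ).sub hQ.hasSum).tsum_eq
    rw [hr, Real.log_mul hδ.ne' hpos.ne', Real.log_div he.ne' hδ.ne']
    simp only [mQ]
    ring
  have := tendsto_nhds_unique (h3.congr' heq) h2
  linarith

/-- Mertens' theorem: `Π_{p ≤ x} (1 - 1/p) ∼ e^{-γ} / log x`, i.e.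
`log x · Π_{p ≤ x} (1 - 1/p) → e^{-γ}` as `x → ∞`. -/
theorem mertens_product :
    Filter.Tendsto
      (fun x : ℝ => Real.log x *
        ∏ p ∈ (Finset.range (⌊x⌋₊ + 1)).filter Nat.Prime, (1 - 1 / (p : ℝ)))
      Filter.atTop (nhds (Real.exp (-Real.eulerMascheroniConstant))) := by
  obtain ⟨C, hC⟩ := m_second
  have h1 := m_A_real hC
  have h2 : Tendsto (fun x : ℝ => ∑ n ∈ range (⌊x⌋₊ + 1), mR 0 n) atTop (𝓝 (∑' n, mR 0 n)) :=
    (mR_summable le_rfl).hasSum.tendsto_sum_nat.comp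
      ((tendsto_add_atTop_nat 1).comp tendsto_nat_floor_atTop)
  have h3 := h1.add h2
  rw [m_const hC] at h3
  have h4 := (Real.continuous_exp.tendsto _).comp h3.neg
  refine h4.congr' ?_
  filter_upwards [eventually_gt_atTop 1] with x hx
  have hl : 0 < Real.log x := Real.log_pos hx
  have hpos : ∀ p ∈ (Finset.range (⌊x⌋₊ + 1)).filter Nat.Prime, 0 < (1 - 1 / (p : ℝ)) := by
    intro p hp
    have : mA p = 1 / (p:ℝ) := by simp [mA, (mem_filter.1 hp).2]
    have := mA_le_half p
    linarith
  have hS : ∑ n ∈ range (⌊x⌋₊ + 1), mA n + ∑ n ∈ range (⌊x⌋₊ + 1), mR 0 n =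
      - Real.log (∏ p ∈ (Finset.range (⌊x⌋₊ + 1)).filter Nat.Prime, (1 - 1 / (p : ℝ))) := by
    rw [Real.log_prod (fun p hp => (hpos p hp).ne'), ← sum_add_distrib, sum_filter,
      ← sum_neg_distrib]
    refine sum_congr rfl (fun n _ => ?_)
    split_ifs with h
    · simp [mR, mQ, mA, h]
    · simp [mR, mQ, mA, h]
  have hP := prod_pos hpos
  simp only [Function.comp]
  rw [show -(∑ n ∈ range (⌊x⌋₊ + 1), mA n - Real.log (Real.log x) +
      ∑ n ∈ range (⌊x⌋₊ + 1), mR 0 n) = Real.log (Real.log x) +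
      Real.log (∏ p ∈ (Finset.range (⌊x⌋₊ + 1)).filter Nat.Prime, (1 - 1 / (p : ℝ))) by linarith]
  rw [Real.exp_add, Real.exp_log hl, Real.exp_log hP]
end
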